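/- arXiv:1801.03237 — 2 statements merged into one kernel-verified Lean document; each statement's English description precedes it below -/
import Mathlib

section
/- Reconstruction of the value function from reduced coordinates: under the group-symmetry and moving-frame assumptions, for every k = 0,…,N and every x ∈ X, J_k(x) = J_k(s(ρ(x))) = J̄_k(ρ(x)), where J̄_k := J_k ∘ s. -/
open MeasureTheory
open scoped ENNReal

/-!
Each symmetry `(φ, χ, ψ)` fixes the value functions, by backward induction on the stage: in the
Bellman equation at `φ x`, substitute `χ u` for the control and `ψ w` for the disturbance. The
moving frame carries `x` to `s (ρ x)` by such a symmetry. The group law makes each `ψ α` a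
measurable isomorphism, and the change of variables along one holds for the lower integral `∫⁻` of
an arbitrary function.
-/

section StageSymmetry

variable {X U W : Type*} [MeasurableSpace W]

/-- The Bellman operator of one stage with disturbance law `μ`, dynamics `f` and cost `g`: it sends
a cost-to-go `V` to the optimal expected cost of playing the stage and then paying `V`. For a
non-measurable integrand, `∫⁻` is the lower integral. -/
noncomputable def bellmanOperator (μ : Measure W) (f : X → U → W → X) (g : X → U → W → ℝ≥0∞)
    (V : X → ℝ≥0∞) (x : X) : ℝ≥0∞ :=
  ⨅ u : U, ∫⁻ w, (g x u w + V (f x u w)) ∂μ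

/-- A symmetry of one stage of a stochastic control problem: transformations of states, controls
and disturbances under which the dynamics are equivariant and the cost and the disturbance law are
invariant. The map `χ` is onto so that infima over controls can be reindexed, and `ψ` is a
measurable embedding so that arbitrary integrands can be transported. -/
structure IsStageSymmetry (μ : Measure W) (f : X → U → W → X) (g : X → U → W → ℝ≥0∞)
    (φ : X → X) (χ : U → U) (ψ : W → W) : Prop where
  surjective : Function.Surjective χ
  measurableEmbedding : MeasurableEmbedding ψ
  measurePreserving : MeasurePreserving ψ μ μ
  map_dynamics : ∀ x u w, φ (f x u w) = f (φ x) (χ u) (ψ w)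
  cost_invariant : ∀ x u w, g (φ x) (χ u) (ψ w) = g x u w

theorem IsStageSymmetry.bellmanOperator_invariant {μ : Measure W} {f : X → U → W → X}
    {g : X → U → W → ℝ≥0∞} {φ : X → X} {χ : U → U} {ψ : W → W}
    (h : IsStageSymmetry μ f g φ χ ψ) {V : X → ℝ≥0∞} (hV : ∀ x, V (φ x) = V x) (x : X) :
    bellmanOperator μ f g V (φ x) = bellmanOperator μ f g V x :=
  calc ⨅ u, ∫⁻ w, (g (φ x) u w + V (f (φ x) u w)) ∂μ
    _ = ⨅ u, ∫⁻ w, (g (φ x) (χ u) w + V (f (φ x) (χ u) w)) ∂μ :=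
      (h.surjective.iInf_comp _).symm
    _ = ⨅ u, ∫⁻ w, (g (φ x) (χ u) (ψ w) + V (f (φ x) (χ u) (ψ w))) ∂μ :=
      iInf_congr fun _ =>
        (h.measurePreserving.lintegral_comp_emb h.measurableEmbedding _).symm
    _ = ⨅ u, ∫⁻ w, (g x u w + V (f x u w)) ∂μ := by
      simp only [h.cost_invariant, ← h.map_dynamics, hV]

theorem valueFunction_invariant {N : ℕ} {μ : ℕ → Measure W} {f : ℕ → X → U → W → X}
    {g : ℕ → X → U → W → ℝ≥0∞} {J : ℕ → X → ℝ≥0∞} {φ : X → X} {χ : U → U} {ψ : W → W}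
    (hJ : ∀ k < N, ∀ x, J k x = bellmanOperator (μ k) (f k) (g k) (J (k + 1)) x)
    (hsymm : ∀ k < N, IsStageSymmetry (μ k) (f k) (g k) φ χ ψ)
    (hterminal : ∀ x, J N (φ x) = J N x) {k : ℕ} (hk : k ≤ N) (x : X) :
    J k (φ x) = J k x := by
  induction hk using Nat.decreasingInduction generalizing x with
  | self => exact hterminal x
  | of_succ k hk ih => rw [hJ k hk, hJ k hk, (hsymm k hk).bellmanOperator_invariant ih]

end StageSymmetry

theorem measurableEmbedding_of_group_action {G W : Type*} [Group G] [MeasurableSpace W]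
    {ψ : G → W → W} (hone : ψ 1 = id) (hmul : ∀ α β : G, ψ (α * β) = ψ α ∘ ψ β)
    (hmeas : ∀ α, Measurable (ψ α)) (α : G) : MeasurableEmbedding (ψ α) :=
  let e : W ≃ᵐ W :=
    { toFun := ψ α
      invFun := ψ α⁻¹
      left_inv := Function.leftInverse_iff_comp.mpr (by rw [← hmul, inv_mul_cancel, hone])
      right_inv := Function.rightInverse_iff_comp.mpr (by rw [← hmul, mul_inv_cancel, hone])
      measurable_toFun := hmeas α
      measurable_invFun := hmeas α⁻¹ }
  e.measurableEmbedding

theorem value_function_from_reduced_coordinates_general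
    {X U W G Y : Type*} [MeasurableSpace W] {N : ℕ}
    {μ : ℕ → Measure W} {f : ℕ → X → U → W → X} {g : ℕ → X → U → W → ℝ≥0∞} {gN : X → ℝ≥0∞}
    {J : ℕ → X → ℝ≥0∞} (hJN : ∀ x, J N x = gN x)
    (hJ : ∀ k < N, ∀ x, J k x = bellmanOperator (μ k) (f k) (g k) (J (k + 1)) x)
    {φ : G → X → X} {χ : G → U → U} {ψ : G → W → W}
    (hsymm : ∀ α, ∀ k < N, IsStageSymmetry (μ k) (f k) (g k) (φ α) (χ α) (ψ α))
    (hgN : ∀ α x, gN (φ α x) = gN x)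
    {ρ : X → Y} {s : Y → X} {γ : X → G} (hframe : ∀ x, φ (γ x) x = s (ρ x))
    {k : ℕ} (hk : k ≤ N) (x : X) : J k x = J k (s (ρ x)) := by
  have hterminal (α : G) (x : X) : J N (φ α x) = J N x := by rw [hJN, hJN, hgN]
  rw [← hframe x, valueFunction_invariant hJ (hsymm (γ x)) (hterminal (γ x)) hk]

/-- Reconstruction of the value function from reduced coordinates:
under the group-symmetry and moving-frame assumptions, for every `k = 0, …, N` and
every `x`, `J k x = J k (s (ρ x)) = J̄ k (ρ x)` where `J̄ k := J k ∘ s`. -/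
theorem value_function_from_reduced_coordinates
    {X U W : Type*} [MeasurableSpace X] [MeasurableSpace U] [MeasurableSpace W]
    [Nonempty U]
    (N : ℕ) (hN : 1 ≤ N)
    (μ : ℕ → Measure W) (hμ : ∀ k < N, IsProbabilityMeasure (μ k))
    (f : ℕ → X → U → W → X)
    (g : ℕ → X → U → W → ℝ≥0∞)
    (gN : X → ℝ≥0∞)
    (J : ℕ → X → ℝ≥0∞)
    (hJN : ∀ x, J N x = gN x)
    (hJ : ∀ k < N, ∀ x, J k x = ⨅ u : U, ∫⁻ w, (g k x u w + J (k + 1) (f k x u w)) ∂(μ k))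
    -- group symmetry
    (G : Type*) [Group G]
    (φ : G → X → X) (χ : G → U → U) (ψ : G → W → W)
    (hχbij : ∀ α : G, Function.Bijective (χ α))
    (hψbij : ∀ α : G, Function.Bijective (ψ α))
    (hψmeas : ∀ α : G, Measurable (ψ α))
    (hφe : φ 1 = id) (hφmul : ∀ α β : G, φ (α * β) = φ α ∘ φ β)
    (hχe : χ 1 = id) (hχmul : ∀ α β : G, χ (α * β) = χ α ∘ χ β)
    (hψe : ψ 1 = id) (hψmul : ∀ α β : G, ψ (α * β) = ψ α ∘ ψ β)
    (hf : ∀ α : G, ∀ k < N, ∀ (x : X) (u : U) (w : W),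
      φ α (f k x u w) = f k (φ α x) (χ α u) (ψ α w))
    (hg : ∀ α : G, ∀ k < N, ∀ (x : X) (u : U) (w : W),
      g k (φ α x) (χ α u) (ψ α w) = g k x u w)
    (hgN : ∀ (α : G) (x : X), gN (φ α x) = gN x)
    (hmap : ∀ α : G, ∀ k < N, Measure.map (ψ α) (μ k) = μ k)
    -- moving frame
    (Y : Type*) (ρ : X → Y)
    (hρ : ∀ (α : G) (x : X), ρ (φ α x) = ρ x)
    (s : Y → X) (γ : X → G)
    (hframe : ∀ x : X, φ (γ x) x = s (ρ x))
    -- measurability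
    (hmeasJ : ∀ k < N, ∀ (x : X) (u : U),
      Measurable fun w => g k x u w + J (k + 1) (f k x u w)) :
    ∀ k ≤ N, ∀ x : X, J k x = J k (s (ρ x)) ∧ J k x = (J k ∘ s) (ρ x) := by
  have hsymm (α : G) (k : ℕ) (hk : k < N) :
      IsStageSymmetry (μ k) (f k) (g k) (φ α) (χ α) (ψ α) :=
    ⟨(hχbij α).surjective, measurableEmbedding_of_group_action hψe hψmul hψmeas α,
      ⟨hψmeas α, hmap α k hk⟩, hf α k hk, hg α k hk⟩
  intro k hk x
  have hx := value_function_from_reduced_coordinates_general hJN hJ hsymm hgN hframe hk x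
  exact ⟨hx, hx⟩
end

section
/- Invariance of the MRI moving-frame coordinates: define ρ : {x ∈ ℝ⁶ : (x₁,x₂) ≠ (0,0)} → ℝ⁵ by ρ(x) = (√(x₁²+x₂²), x₃, (x₂x₄ − x₁x₅)/√(x₁²+x₂²), (x₁x₄ + x₂x₅)/√(x₁²+x₂²), x₆). For α ∈ ℝ let Φ_α be the 6×6 block-diagonal matrix blockdiag(R_α, R_α) where R_α = [[cos α, −sin α, 0],[sin α, cos α, 0],[0,0,1]]. Then for every α ∈ ℝ and every x ∈ ℝ⁶ with (x₁,x₂) ≠ (0,0), the point Φ_α x also satisfies ((Φ_α x)₁,(Φ_α x)₂) ≠ (0,0) and ρ(Φ_α x) = ρ(x). -/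
open Matrix

/-- The 6×6 block-diagonal matrix `blockdiag(U, U)` with two copies of the 3×3 matrix
`U` on the diagonal. -/
def blockDiag2 (U : Matrix (Fin 3) (Fin 3) ℝ) : Matrix (Fin 6) (Fin 6) ℝ :=
  Matrix.reindex finSumFinEquiv finSumFinEquiv (Matrix.fromBlocks U 0 0 U)

/-- The rotation `R_α` about the third axis. -/
noncomputable def rotZ (α : ℝ) : Matrix (Fin 3) (Fin 3) ℝ :=
  !![Real.cos α, -Real.sin α, 0;
     Real.sin α,  Real.cos α, 0;
     0, 0, 1]

/-- The block rotation `Φ_α = blockdiag(R_α, R_α)` acting on `ℝ⁶`. -/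
noncomputable def mriPhi (α : ℝ) : Matrix (Fin 6) (Fin 6) ℝ := blockDiag2 (rotZ α)

/-- The moving-frame invariants `ρ(x)` of the MRI model (in 0-based coordinates:
`ρ(x) = (√(x₁²+x₂²), x₃, (x₂x₄ − x₁x₅)/√(x₁²+x₂²), (x₁x₄ + x₂x₅)/√(x₁²+x₂²), x₆)`). -/
noncomputable def mriRho (x : Fin 6 → ℝ) : Fin 5 → ℝ :=
  ![Real.sqrt (x 0 ^ 2 + x 1 ^ 2),
    x 2,
    (x 1 * x 3 - x 0 * x 4) / Real.sqrt (x 0 ^ 2 + x 1 ^ 2),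
    (x 0 * x 3 + x 1 * x 4) / Real.sqrt (x 0 ^ 2 + x 1 ^ 2),
    x 5]

/-!
Identify the horizontal parts `(x₁, x₂)` and `(x₄, x₅)` with complex numbers `z` and `w`. Then
`Φ_α` multiplies both by `exp (iα)` and fixes `x₃` and `x₆`, so it preserves `‖z‖` and the
Hermitian product `z̄ w`. These determine `ρ`, whose third and fourth coordinates are
`-Im (z̄ w) / ‖z‖` and `Re (z̄ w) / ‖z‖`.
-/

open scoped ComplexConjugate

theorem conj_mul_mul_mul_of_norm_eq_one {𝕜 : Type*} [RCLike 𝕜] {c : 𝕜} (hc : ‖c‖ = 1)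
    (z w : 𝕜) : conj (c * z) * (c * w) = conj z * w := by
  calc conj (c * z) * (c * w) = conj c * c * (conj z * w) := by rw [map_mul]; ring
    _ = conj z * w := by rw [RCLike.conj_mul, hc, RCLike.ofReal_one, one_pow, one_mul]

theorem append_comp_finSumFinEquiv {β : Type*} {m n : ℕ} (u : Fin m → β) (v : Fin n → β) :
    Fin.append u v ∘ finSumFinEquiv = Sum.elim u v := by
  ext (i | j) <;> simp

theorem reindex_fromBlocks_mulVec_append {R : Type*} [NonUnitalNonAssocSemiring R] {k l m n : ℕ}
    (A : Matrix (Fin k) (Fin m) R) (B : Matrix (Fin k) (Fin n) R)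
    (C : Matrix (Fin l) (Fin m) R) (D : Matrix (Fin l) (Fin n) R)
    (u : Fin m → R) (v : Fin n → R) :
    reindex finSumFinEquiv finSumFinEquiv (fromBlocks A B C D) *ᵥ Fin.append u v =
      Fin.append (A *ᵥ u + B *ᵥ v) (C *ᵥ u + D *ᵥ v) := by
  rw [reindex_apply, submatrix_mulVec_equiv, Equiv.symm_symm, Equiv.comp_symm_eq,
    append_comp_finSumFinEquiv, append_comp_finSumFinEquiv, fromBlocks_mulVec,
    Sum.elim_comp_inl, Sum.elim_comp_inr]

theorem blockDiag2_mulVec_append (U : Matrix (Fin 3) (Fin 3) ℝ) (u v : Fin 3 → ℝ) :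
    blockDiag2 U *ᵥ Fin.append u v = Fin.append (U *ᵥ u) (U *ᵥ v) := by
  simpa [blockDiag2] using reindex_fromBlocks_mulVec_append U 0 0 U u v

/-- The projection of a vector of `ℝ³` to the plane orthogonal to the third axis, with that plane
identified with `ℂ` so that rotations about the axis become multiplications. -/
def horizontal (u : Fin 3 → ℝ) : ℂ := ⟨u 0, u 1⟩

theorem horizontal_eq_zero_iff {u : Fin 3 → ℝ} : horizontal u = 0 ↔ (u 0, u 1) = (0, 0) := by
  simp [horizontal, Complex.ext_iff]

theorem norm_horizontal (u : Fin 3 → ℝ) : ‖horizontal u‖ = √(u 0 ^ 2 + u 1 ^ 2) :=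
  Complex.norm_eq_sqrt_sq_add_sq (horizontal u)

theorem rotZ_mulVec (α : ℝ) (u : Fin 3 → ℝ) :
    rotZ α *ᵥ u =
      ![Real.cos α * u 0 - Real.sin α * u 1, Real.sin α * u 0 + Real.cos α * u 1, u 2] := by
  ext i
  fin_cases i <;> simp [rotZ, mulVec, dotProduct, Fin.sum_univ_three, sub_eq_add_neg]

theorem rotZ_mulVec_two (α : ℝ) (u : Fin 3 → ℝ) : (rotZ α *ᵥ u) 2 = u 2 := by
  simp [rotZ_mulVec]

theorem horizontal_rotZ_mulVec (α : ℝ) (u : Fin 3 → ℝ) :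
    horizontal (rotZ α *ᵥ u) = Complex.exp (α * Complex.I) * horizontal u := by
  apply Complex.ext <;>
    simp [horizontal, rotZ_mulVec, Complex.exp_ofReal_mul_I_re, Complex.exp_ofReal_mul_I_im,
      add_comm]

theorem mriPhi_mulVec_append (α : ℝ) (u v : Fin 3 → ℝ) :
    mriPhi α *ᵥ Fin.append u v = Fin.append (rotZ α *ᵥ u) (rotZ α *ᵥ v) :=
  blockDiag2_mulVec_append (rotZ α) u v

theorem mriRho_append (u v : Fin 3 → ℝ) :
    mriRho (Fin.append u v) =
      ![‖horizontal u‖,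
        u 2,
        -(conj (horizontal u) * horizontal v).im / ‖horizontal u‖,
        (conj (horizontal u) * horizontal v).re / ‖horizontal u‖,
        v 2] := by
  have re_eq : (conj (horizontal u) * horizontal v).re = u 0 * v 0 + u 1 * v 1 := by
    simp [horizontal]
  have neg_im_eq : -(conj (horizontal u) * horizontal v).im = u 1 * v 0 - u 0 * v 1 := by
    simp [horizontal, sub_eq_add_neg]
  rw [norm_horizontal, re_eq, neg_im_eq]
  rfl

theorem mriRho_mriPhi_mulVec_append (α : ℝ) (u v : Fin 3 → ℝ) :
    mriRho (mriPhi α *ᵥ Fin.append u v) = mriRho (Fin.append u v) := by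
  have norm_exp : ‖Complex.exp (α * Complex.I)‖ = 1 := Complex.norm_exp_ofReal_mul_I α
  rw [mriPhi_mulVec_append]
  simp only [mriRho_append, horizontal_rotZ_mulVec, rotZ_mulVec_two, norm_mul, norm_exp, one_mul,
    conj_mul_mul_mul_of_norm_eq_one norm_exp]

/-- Invariance of the MRI moving-frame coordinates: for every
`α ∈ ℝ` and every `x ∈ ℝ⁶` with `(x₁, x₂) ≠ (0, 0)`, the point `Φ_α x` also satisfies
`((Φ_α x)₁, (Φ_α x)₂) ≠ (0, 0)`, and `ρ(Φ_α x) = ρ(x)`. -/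
theorem mri_rho_invariant :
    ∀ (α : ℝ) (x : Fin 6 → ℝ), (x 0, x 1) ≠ (0, 0) →
      (((mriPhi α).mulVec x 0, (mriPhi α).mulVec x 1) ≠ (0, 0) ∧
        mriRho ((mriPhi α).mulVec x) = mriRho x) := by
  intro α x hx
  obtain ⟨u, v, rfl⟩ : ∃ u v : Fin 3 → ℝ, x = Fin.append u v :=
    ⟨_, _, (Fin.append_castAdd_natAdd (m := 3) (n := 3)).symm⟩
  refine ⟨?_, mriRho_mriPhi_mulVec_append α u v⟩
  have horizontal_ne : horizontal u ≠ 0 := horizontal_eq_zero_iff.not.mpr hx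
  have rotated_ne : horizontal (rotZ α *ᵥ u) ≠ 0 := by
    rw [horizontal_rotZ_mulVec]
    exact mul_ne_zero (Complex.exp_ne_zero _) horizontal_ne
  rw [mriPhi_mulVec_append]
  exact horizontal_eq_zero_iff.not.mp rotated_ne
end
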